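/- Let P_F be the pattern for a 3-CNF formula F over variables V and let m = |C(P_F)| + 3. Then F is satisfiable if and only if P_F can be self-assembled by a DTAS T with at most m tile types. -/

import Mathlib

/-!
Suppose a directed system with three tile types more than there are colors assembles the pattern.
Every color needs a type, so at most three types are extra (`sum_ofColor_le`). Each `Yᵢ` in `p` is
determined by a pair of `OR` tiles, hence there are at least three `OR` types (`three_le_or`), and
the subpatterns `q₁, …, q₄` give a fourth. All other colors then have one type only, and the colors
of the gates, of `+` and of `-` force the four `OR` tiles to compute disjunction on two glues per
direction (`computesOr`). The subpatterns `r₁, r₂, r₃` make the tiles `v` and `¬v` emit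
complementary bits (`var_bits`), and the subpattern of a clause passes the disjunction of its three
literals to `+`, which accepts only `1`; so the bits satisfy the formula
(`satisfiable_of_assembly`).

Conversely, given a satisfying assignment, the `OR` positions are annotated with the inputs of the
gate (`kBlocks`), and each color gets one tile (four for `OR`) with glues that match inside every
block (`kBlocks_good`) and whose inputs determine the tile (`kTile_eq`). Tiles with a unique color
occur once, so they adapt their glues to repeatable neighbors; one of their inputs always comes from
another unique tile or from the seed and carries the position, which keeps the system directed
(`assembly_of_layout`).
-/

/-- A colored Wang tile with a color and four glues (north, east, south, west). -/
structure Tile (C G : Type) where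
  color : C
  north : G
  east : G
  south : G
  west : G
deriving DecidableEq

/-- A rectilinear tile assembly system: a finite set of tile types together with
an L-shaped seed, given by its north glues (bottom arm) and east glues (left arm). -/
structure RTAS (C G : Type) where
  tiles : Finset (Tile C G)
  seedN : ℕ → G
  seedE : ℕ → G

/-- A tile assignment for the `M × N` rectangle spanned by the seed:
every tile belongs to the system, west/south glues match the east/north glues of the
west/south neighbours, and the seed glues on the boundary. -/
def IsAssignment {C G : Type} (T : RTAS C G) (M N : ℕ) (f : ℕ → ℕ → Tile C G) : Prop :=
  (∀ x < M, ∀ y < N, f x y ∈ T.tiles) ∧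
  (∀ y < N, (f 0 y).west = T.seedE y) ∧
  (∀ x < M, (f x 0).south = T.seedN x) ∧
  (∀ x, x + 1 < M → ∀ y < N, (f (x + 1) y).west = (f x y).east) ∧
  (∀ x < M, ∀ y, y + 1 < N → (f x (y + 1)).south = (f x y).north)

/-- `T` self-assembles the `M × N` pattern `P` if some tile assignment realizes `P`. -/
def SelfAssembles {C G : Type} (T : RTAS C G) (M N : ℕ) (P : ℕ → ℕ → C) : Prop :=
  ∃ f, IsAssignment T M N f ∧ ∀ x < M, ∀ y < N, (f x y).color = P x y

/-- A directed RTAS: distinct tile types differ in their south or west glue. -/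
def DirectedTAS {C G : Type} (T : RTAS C G) : Prop :=
  ∀ t₁ ∈ T.tiles, ∀ t₂ ∈ T.tiles, t₁ ≠ t₂ → t₁.south ≠ t₂.south ∨ t₁.west ≠ t₂.west

/-- The set of colors occurring in the `M × N` pattern `P`. -/
def colorsOf {C : Type} [DecidableEq C] (M N : ℕ) (P : ℕ → ℕ → C) : Finset C :=
  (Finset.range M ×ˢ Finset.range N).image fun q => P q.1 q.2

/-- The named colors used in the subpatterns of the pattern `P_F` of the paper.
`uniq n` are the "unique" filler colors. -/
inductive PColor where
  | orC | plus | minus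
  | Z1 | Z2 | Z3 | Z4
  | aC | bW | bD | cW | cD | dC
  | arrW (w : Fin 2)
  | arrD (w : Fin 2)
  | upW (s : Fin 2)
  | upD (s : Fin 2)
  | gate (i : Fin 4)
  | X (i : Fin 8)
  | Y (i : Fin 8)
  | varW (v : ℕ)
  | negW (v : ℕ)
  | varAux (v : ℕ)
  | varMod (v : ℕ)
  | varModd (v : ℕ)
  | uniq (n : ℕ)
deriving DecidableEq

/-- The `16 × 2` subpattern `p`: eight `2 × 2` blocks, block `i` having colors
`Xᵢ` (bottom-left), `OR` (bottom-right, top-left) and `Yᵢ` (top-right). -/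
def pPat : ℕ → ℕ → PColor := fun x y =>
  if y = 0 then
    if x % 2 = 0 then PColor.X ⟨x / 2 % 8, Nat.mod_lt _ (by norm_num)⟩ else PColor.orC
  else
    if x % 2 = 0 then PColor.orC else PColor.Y ⟨x / 2 % 8, Nat.mod_lt _ (by norm_num)⟩

/-- The `4 × 4` subpatterns `q₁, …, q₄` (index `idx = 0, …, 3`), with west input
`w = idx / 2` and south input `s = idx % 2` feeding an `OR`-colored position. -/
def qPat (idx : Fin 4) : ℕ → ℕ → PColor := fun x y =>
  let wv : Fin 2 := ⟨idx.val / 2, by have := idx.isLt; omega⟩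
  let sv : Fin 2 := ⟨idx.val % 2, Nat.mod_lt _ (by norm_num)⟩
  match x, y with
  | 0, 0 => PColor.Z1
  | 1, 0 => PColor.Z2
  | 2, 0 => PColor.upD sv
  | 3, 0 => PColor.bD
  | 0, 1 => PColor.Z3
  | 1, 1 => PColor.aC
  | 2, 1 => PColor.upW sv
  | 3, 1 => PColor.bW
  | 0, 2 => PColor.arrD wv
  | 1, 2 => PColor.arrW wv
  | 2, 2 => PColor.orC
  | 3, 2 => if idx.val = 0 then PColor.minus else PColor.plus
  | 0, 3 => PColor.cD
  | 1, 3 => PColor.cW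
  | 2, 3 => PColor.gate idx
  | _, _ => PColor.dC

/-- The `6 × 3` subpattern `q₅`: bottom row `a ↑₀ ↑₁ ↑₀ ↑₁ b`, middle row
`→₀ OR OR OR OR +`, top row `c A B C D d`. -/
def q5Pat : ℕ → ℕ → PColor := fun x y =>
  match y, x with
  | 0, 0 => PColor.aC
  | 0, 1 => PColor.upW 0
  | 0, 2 => PColor.upW 1
  | 0, 3 => PColor.upW 0
  | 0, 4 => PColor.upW 1
  | 0, _ => PColor.bW
  | 1, 0 => PColor.arrW 0
  | 1, 5 => PColor.plus
  | 1, _ => PColor.orC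
  | 2, 0 => PColor.cW
  | 2, 1 => PColor.gate 0
  | 2, 2 => PColor.gate 1
  | 2, 3 => PColor.gate 2
  | 2, 4 => PColor.gate 3
  | _, _ => PColor.dC

/-- A literal: a variable index together with its sign (`true` = positive). -/
abbrev Lit := ℕ × Bool

/-- A clause with three literals. -/
abbrev Clause3 := Lit × Lit × Lit

/-- A boolean formula in 3-CNF over the variables `0, …, numVars - 1`. -/
structure CNF3 where
  numVars : ℕ
  clauses : List Clause3
  wf : ∀ cl ∈ clauses, cl.1.1 < numVars ∧ cl.2.1.1 < numVars ∧ cl.2.2.1 < numVars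

/-- Value of a literal under a variable assignment. -/
def litVal (f : ℕ → Bool) (l : Lit) : Bool := if l.2 then f l.1 else ! f l.1

/-- A 3-CNF formula is satisfiable if some assignment makes every clause true. -/
def CNF3.Satisfiable (F : CNF3) : Prop :=
  ∃ f : ℕ → Bool, ∀ cl ∈ F.clauses,
    (litVal f cl.1 || litVal f cl.2.1 || litVal f cl.2.2) = true

/-- The `2 × 2` subpattern `r₁(v)`. -/
def r1Pat (v : ℕ) : ℕ → ℕ → PColor := fun x y =>
  match x, y with
  | 0, 0 => PColor.Z4
  | 1, 0 => PColor.varW v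
  | 0, 1 => PColor.varAux v
  | _, _ => PColor.varMod v

/-- The `2 × 2` subpattern `r₂(v)`. -/
def r2Pat (v : ℕ) : ℕ → ℕ → PColor := fun x y =>
  match x, y with
  | 0, 0 => PColor.Z4
  | 1, 0 => PColor.negW v
  | 0, 1 => PColor.varAux v
  | _, _ => PColor.varModd v

/-- The `4 × 2` subpattern `r₃(v)`: bottom row `a v ¬v b`, top row `→₀ OR OR +`. -/
def r3Pat (v : ℕ) : ℕ → ℕ → PColor := fun x y =>
  match y, x with
  | 0, 0 => PColor.aC
  | 0, 1 => PColor.varW v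
  | 0, 2 => PColor.negW v
  | 0, _ => PColor.bW
  | 1, 0 => PColor.arrW 0
  | 1, 3 => PColor.plus
  | _, _ => PColor.orC

/-- The color of a literal. -/
def litColor (l : Lit) : PColor := if l.2 then PColor.varW l.1 else PColor.negW l.1

/-- The `5 × 2` subpattern `s(C)` for a clause `C = (c₁ ∨ c₂ ∨ c₃)`:
bottom row `a c₁ c₂ c₃ b`, top row `→₀ OR OR OR +`. -/
def sPat (cl : Clause3) : ℕ → ℕ → PColor := fun x y =>
  match y, x with
  | 0, 0 => PColor.aC
  | 0, 1 => litColor cl.1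
  | 0, 2 => litColor cl.2.1
  | 0, 3 => litColor cl.2.2
  | 0, _ => PColor.bW
  | 1, 0 => PColor.arrW 0
  | 1, 4 => PColor.plus
  | _, _ => PColor.orC

/-- A rectangular block: width, height and contents. -/
abbrev PBlock := ℕ × ℕ × (ℕ → ℕ → PColor)

/-- The list of subpatterns of `P_F`: `p`, `q₁, …, q₅`, then `r₁(v), r₂(v), r₃(v)`
for every variable `v`, then `s(C)` for every clause `C`. -/
def blocksOf (F : CNF3) : List PBlock :=
  [(16, 2, pPat), (4, 4, qPat 0), (4, 4, qPat 1), (4, 4, qPat 2), (4, 4, qPat 3),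
    (6, 3, q5Pat)]
    ++ (List.range F.numVars).flatMap
        (fun v => [(2, 2, r1Pat v), (2, 2, r2Pat v), (4, 2, r3Pat v)])
    ++ F.clauses.map (fun cl => (5, 2, sPat cl))

/-- Place the blocks side by side (starting at column `x0`, occupying rows `1, …, h`),
with one column of unique colors before each block and after the last one; all the
remaining positions carry unique colors (`uniq` of the position code). -/
def place : List PBlock → ℕ → ℕ → ℕ → PColor
  | [], _, x, y => PColor.uniq (Nat.pair x y)
  | b :: bs, x0, x, y =>
      if x0 ≤ x ∧ x < x0 + b.1 ∧ 1 ≤ y ∧ y < 1 + b.2.1 then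
        b.2.2 (x - x0) (y - 1)
      else if x < x0 + b.1 + 1 then PColor.uniq (Nat.pair x y)
      else place bs (x0 + b.1 + 1) x y

/-- The pattern `P_F` of the paper, of height `6` and width `45 + 11·|V| + 6·ℓ`. -/
def patF (F : CNF3) : ℕ → ℕ → PColor := fun x y => place (blocksOf F) 1 x y

/-- The width of the pattern `P_F`. -/
def widthF (F : CNF3) : ℕ := 45 + 11 * F.numVars + 6 * F.clauses.length

/-! ### Occurrences of the subpatterns -/

/-- Every block of the list occurs in the placed pattern, followed by a further column. -/
lemma place_occurs (bs : List PBlock) (x0 : ℕ) (b : PBlock) (hb : b ∈ bs) :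
    ∃ x1, x1 + b.1 < x0 + (bs.map (fun b => b.1 + 1)).sum ∧
      ∀ i < b.1, ∀ j < b.2.1, place bs x0 (x1 + i) (1 + j) = b.2.2 i j := by
  suffices h : ∃ x1, x0 ≤ x1 ∧ x1 + b.1 < x0 + (bs.map (fun b => b.1 + 1)).sum ∧
      ∀ i < b.1, ∀ j < b.2.1, place bs x0 (x1 + i) (1 + j) = b.2.2 i j by
    obtain ⟨x1, -, h⟩ := h
    exact ⟨x1, h⟩
  induction bs generalizing x0 with
  | nil => simp at hb
  | cons a bs ih =>
    rcases List.mem_cons.1 hb with rfl | hb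
    · refine ⟨x0, le_rfl, by simp; omega, fun i hi j hj => ?_⟩
      rw [place, if_pos (by omega)]
      rw [Nat.add_sub_cancel_left, Nat.add_sub_cancel_left]
    · obtain ⟨x1, h1, h2, h3⟩ := ih (x0 + a.1 + 1) hb
      refine ⟨x1, by omega, by simp only [List.map_cons, List.sum_cons]; omega,
        fun i hi j hj => ?_⟩
      rw [place, if_neg (by omega), if_neg (by omega)]
      exact h3 i hi j hj

lemma width_blocks (F : CNF3) :
    1 + ((blocksOf F).map (fun b => b.1 + 1)).sum = widthF F := by
  have h1 : ∀ n : ℕ, (((List.range n).flatMap (fun v =>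
      [((2, 2, r1Pat v) : PBlock), (2, 2, r2Pat v), (4, 2, r3Pat v)])).map
        (fun b : PBlock => b.1 + 1)).sum = 11 * n := by
    intro n
    induction n with
    | zero => simp
    | succ n ih =>
      rw [List.range_succ, List.flatMap_append, List.map_append, List.sum_append, ih]
      simp
      omega
  have h2 : ∀ l : List Clause3, ((l.map (fun cl => ((5, 2, sPat cl) : PBlock))).map
      (fun b : PBlock => b.1 + 1)).sum = 6 * l.length := by
    intro l
    induction l with
    | nil => simp
    | cons a l ih => simp only [List.map_cons, List.sum_cons, ih, List.length_cons]; omega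
  unfold blocksOf widthF
  rw [List.map_append, List.sum_append, List.map_append, List.sum_append, h1, h2]
  simp
  omega

/-- A `w × h` pattern is realized by tiles of `T` with matching inner glues; no condition is
imposed on the glues at the boundary of the rectangle. -/
def Realizes {G : Type} (T : RTAS PColor G) (w h : ℕ) (pat : ℕ → ℕ → PColor)
    (g : ℕ → ℕ → Tile PColor G) : Prop :=
  (∀ i < w, ∀ j < h, g i j ∈ T.tiles) ∧
  (∀ i < w, ∀ j < h, (g i j).color = pat i j) ∧
  (∀ i j, i + 1 < w → j < h → (g (i + 1) j).west = (g i j).east) ∧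
  (∀ i j, i < w → j + 1 < h → (g i (j + 1)).south = (g i j).north)

lemma height_blocks (F : CNF3) (b : PBlock) (hb : b ∈ blocksOf F) : b.2.1 ≤ 4 := by
  simp only [blocksOf, List.mem_append, List.mem_flatMap, List.mem_map, List.mem_cons,
    List.not_mem_nil, or_false] at hb
  rcases hb with ((rfl | rfl | rfl | rfl | rfl | rfl) | ⟨v, -, rfl | rfl | rfl⟩) | ⟨c, -, rfl⟩ <;>
    simp

lemma var_mem {F : CNF3} {v : ℕ} (hv : v < F.numVars) (b : PBlock)
    (hb : b ∈ [((2, 2, r1Pat v) : PBlock), (2, 2, r2Pat v), (4, 2, r3Pat v)]) :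
    b ∈ blocksOf F := by
  simp only [blocksOf, List.mem_append, List.mem_flatMap]
  exact Or.inl (Or.inr ⟨v, List.mem_range.2 hv, hb⟩)

/-- A block of the pattern is realized by tiles of the system, and its colors are colors of the
pattern. -/
lemma realizes_block {G : Type} {F : CNF3} {T : RTAS PColor G}
    (hT : SelfAssembles T (widthF F) 6 (patF F)) (b : PBlock) (hb : b ∈ blocksOf F) :
    (∃ g, Realizes T b.1 b.2.1 b.2.2 g) ∧
      ∀ i < b.1, ∀ j < b.2.1, b.2.2 i j ∈ colorsOf (widthF F) 6 (patF F) := by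
  obtain ⟨f, ⟨h1, -, -, h4, h5⟩, hc⟩ := hT
  obtain ⟨x1, hx, hp⟩ := place_occurs (blocksOf F) 1 b hb
  rw [width_blocks] at hx
  have hh := height_blocks F b hb
  refine ⟨⟨fun i j => f (x1 + i) (1 + j), ?_, ?_, ?_, ?_⟩, ?_⟩
  · intro i hi j hj
    exact h1 _ (by omega) _ (by omega)
  · intro i hi j hj
    rw [hc _ (by omega) _ (by omega)]
    exact hp i hi j hj
  · intro i j hi hj
    exact h4 (x1 + i) (by omega) _ (by omega)
  · intro i j hi hj
    exact h5 _ (by omega) (1 + j) (by omega)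
  · intro i hi j hj
    rw [← hp i hi j hj]
    exact Finset.mem_image.2 ⟨(x1 + i, 1 + j), by simp; omega, rfl⟩

/-! ### Counting tile types -/

open Classical in
/-- The tile types of a given color. -/
noncomputable def ofColor {G : Type} (T : RTAS PColor G) (c : PColor) : Finset (Tile PColor G) :=
  T.tiles.filter (fun t => t.color = c)

lemma mem_ofColor {G : Type} {T : RTAS PColor G} {c : PColor} {t : Tile PColor G} :
    t ∈ ofColor T c ↔ t ∈ T.tiles ∧ t.color = c := by
  classical
  simp [ofColor]

/-- Every color needs a tile type, so a set `D` of colors has at most three tile types more than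
it has elements. -/
lemma sum_ofColor_le {G : Type} {F : CNF3} {T : RTAS PColor G}
    (hT : SelfAssembles T (widthF F) 6 (patF F))
    (hcard : T.tiles.card ≤ (colorsOf (widthF F) 6 (patF F)).card + 3)
    (D : Finset PColor) (hD : D ⊆ colorsOf (widthF F) 6 (patF F)) :
    ∑ c ∈ D, (ofColor T c).card ≤ D.card + 3 := by
  classical
  set S := colorsOf (widthF F) 6 (patF F) with hS
  have h1 : ∀ c ∈ S, 1 ≤ (ofColor T c).card := by
    intro c hc
    obtain ⟨f, ⟨hf, -⟩, hcol⟩ := hT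
    obtain ⟨⟨x, y⟩, hxy, rfl⟩ := Finset.mem_image.1 hc
    simp only [Finset.mem_product, Finset.mem_range] at hxy
    exact Finset.card_pos.2 ⟨f x y, mem_ofColor.2 ⟨hf x hxy.1 y hxy.2, hcol x hxy.1 y hxy.2⟩⟩
  have h2 : ∑ c ∈ S, (ofColor T c).card ≤ T.tiles.card := by
    unfold ofColor
    rw [← Finset.card_biUnion (fun c _ d _ hcd => Finset.disjoint_filter.2
      (fun t _ h1 h2 => hcd (h1.symm.trans h2)))]
    exact Finset.card_le_card (Finset.biUnion_subset.2 fun c _ => Finset.filter_subset _ _)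
  have h3 : (S \ D).card ≤ ∑ c ∈ S \ D, (ofColor T c).card := by
    simpa using Finset.card_nsmul_le_sum (S \ D) (fun c => (ofColor T c).card) 1
      (fun c hc => h1 c (Finset.sdiff_subset hc))
  have h4 := Finset.sum_sdiff (f := fun c => (ofColor T c).card) hD
  have h5 := Finset.card_sdiff_add_card_eq_card hD
  omega

/-- All tile types of color `c` coincide. -/
def Single {G : Type} (T : RTAS PColor G) (c : PColor) : Prop :=
  ∀ t ∈ T.tiles, ∀ t' ∈ T.tiles, t.color = c → t'.color = c → t = t'

lemma single_of_card {G : Type} {T : RTAS PColor G} {c : PColor}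
    (h : (ofColor T c).card ≤ 1) : Single T c := by
  intro t ht t' ht' hc hc'
  exact Finset.card_le_one.1 h t (mem_ofColor.2 ⟨ht, hc⟩) t' (mem_ofColor.2 ⟨ht', hc'⟩)

/-- In a directed system the inputs determine the tile type. -/
lemma DirectedTAS.eq {G : Type} {T : RTAS PColor G} (hd : DirectedTAS T) {t t' : Tile PColor G}
    (ht : t ∈ T.tiles) (ht' : t' ∈ T.tiles) (hs : t.south = t'.south) (hw : t.west = t'.west) :
    t = t' := by
  by_contra hne
  rcases hd t ht t' ht' hne with h | h
  · exact h hs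
  · exact h hw

/-- The tiles `Yᵢ` are determined by two `OR` tiles, so the square of the number of `OR` tile
types is at least eight. -/
lemma three_le_or {G : Type} {T : RTAS PColor G} (hd : DirectedTAS T)
    {g : ℕ → ℕ → Tile PColor G} (hg : Realizes T 16 2 pPat g) :
    3 ≤ (ofColor T PColor.orC).card := by
  classical
  obtain ⟨hm, hc, hh, hv⟩ := hg
  have key : (Finset.univ : Finset (Fin 8)).card ≤
      (ofColor T PColor.orC ×ˢ ofColor T PColor.orC).card := by
    apply Finset.card_le_card_of_injOn (fun i : Fin 8 => (g (2 * i + 1) 0, g (2 * i) 1))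
    · intro i _
      have hi := i.isLt
      simp only [Finset.coe_product, Set.mem_prod, Finset.mem_coe, mem_ofColor]
      refine ⟨⟨hm _ (by omega) _ (by omega), ?_⟩, ⟨hm _ (by omega) _ (by omega), ?_⟩⟩
      · rw [hc _ (by omega) _ (by omega)]
        simp [pPat, Nat.add_mod]
      · rw [hc _ (by omega) _ (by omega)]
        simp [pPat]
    · intro i _ j _ hij
      have hi := i.isLt
      have hj := j.isLt
      simp only [Prod.mk.injEq] at hij
      have e : g (2 * i + 1) 1 = g (2 * j + 1) 1 := by
        apply hd.eq (hm _ (by omega) _ (by omega)) (hm _ (by omega) _ (by omega))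
        · rw [hv _ 0 (by omega) (by omega), hv _ 0 (by omega) (by omega), hij.1]
        · rw [hh _ 1 (by omega) (by omega), hh _ 1 (by omega) (by omega), hij.2]
      have e2 := congrArg Tile.color e
      rw [hc _ (by omega) _ (by omega), hc _ (by omega) _ (by omega)] at e2
      simp [pPat, Nat.add_mod] at e2
      apply Fin.ext
      omega
  rw [Finset.card_product] at key
  simp only [Finset.card_univ, Fintype.card_fin] at key
  by_contra hlt
  have : (ofColor T PColor.orC).card ≤ 2 := by omega
  nlinarith

/-! ### The gate subpatterns -/

section Gates

variable {G : Type} {T : RTAS PColor G} {g : Fin 4 → ℕ → ℕ → Tile PColor G}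

/-- If `c` has a single tile type, the four gates share their west glue, so the `OR` tiles below
them have different north glues. -/
lemma or_north_injective (hd : DirectedTAS T) (hg : ∀ i, Realizes T 4 4 (qPat i) (g i))
    (hcW : Single T PColor.cW) : Function.Injective (fun i => (g i 2 2).north) := by
  intro i j hij
  have hW : g i 1 3 = g j 1 3 := hcW _ ((hg i).1 1 (by simp) 3 (by simp)) _
    ((hg j).1 1 (by simp) 3 (by simp)) ((hg i).2.1 1 (by simp) 3 (by simp))
    ((hg j).2.1 1 (by simp) 3 (by simp))
  have e : g i 2 3 = g j 2 3 := by
    apply hd.eq ((hg i).1 2 (by simp) 3 (by simp)) ((hg j).1 2 (by simp) 3 (by simp))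
    · rw [(hg i).2.2.2 2 2 (by simp) (by simp), (hg j).2.2.2 2 2 (by simp) (by simp)]
      exact hij
    · rw [(hg i).2.2.1 1 3 (by simp) (by simp), (hg j).2.2.1 1 3 (by simp) (by simp), hW]
  have e2 := congrArg Tile.color e
  rw [(hg i).2.1 2 (by simp) 3 (by simp), (hg j).2.1 2 (by simp) 3 (by simp)] at e2
  simpa [qPat] using e2

/-- The colors `+` and `-` distinguish the east glue of the `OR` tile with inputs `0, 0` from the
east glues of the others. -/
lemma or_east_ne (hd : DirectedTAS T) (hg : ∀ i, Realizes T 4 4 (qPat i) (g i))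
    (hbW : Single T PColor.bW) {i : Fin 4} (hi : i ≠ 0) :
    (g 0 2 2).east ≠ (g i 2 2).east := by
  intro hij
  have hB : g 0 3 1 = g i 3 1 := hbW _ ((hg 0).1 3 (by simp) 1 (by simp)) _
    ((hg i).1 3 (by simp) 1 (by simp)) ((hg 0).2.1 3 (by simp) 1 (by simp))
    ((hg i).2.1 3 (by simp) 1 (by simp))
  have e : g 0 3 2 = g i 3 2 := by
    apply hd.eq ((hg 0).1 3 (by simp) 2 (by simp)) ((hg i).1 3 (by simp) 2 (by simp))
    · rw [(hg 0).2.2.2 3 1 (by simp) (by simp), (hg i).2.2.2 3 1 (by simp) (by simp), hB]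
    · rw [(hg 0).2.2.1 2 2 (by simp) (by simp), (hg i).2.2.1 2 2 (by simp) (by simp), hij]
  have e2 := congrArg Tile.color e
  rw [(hg 0).2.1 3 (by simp) 2 (by simp), (hg i).2.1 3 (by simp) 2 (by simp)] at e2
  have hi' : i.val ≠ 0 := fun h => hi (Fin.ext h)
  simp [qPat, hi] at e2

/-- With single tile types for the input colors, the west and south glues of the four `OR` tiles
are `e w` and `n s` for two distinct glues each. -/
lemma or_inputs (hd : DirectedTAS T) (hg : ∀ i, Realizes T 4 4 (qPat i) (g i))
    (hbW : Single T PColor.bW) (harr : ∀ w, Single T (PColor.arrW w))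
    (hup : ∀ s, Single T (PColor.upW s)) :
    ∃ e n : Bool → G, e false ≠ e true ∧ n false ≠ n true ∧
      (∀ t ∈ T.tiles, t.color = PColor.arrW 0 → t.east = e false) ∧
      (∀ t ∈ T.tiles, t.color = PColor.upW 0 → t.north = n false) ∧
      (∀ t ∈ T.tiles, t.color = PColor.upW 1 → t.north = n true) ∧
      (∀ i : Fin 4, (g i 2 2).west = e (decide (2 ≤ i.val)) ∧
        (g i 2 2).south = n (decide (i.val % 2 = 1))) := by
  have hA : ∀ i j : Fin 4, i.val / 2 = j.val / 2 → g i 1 2 = g j 1 2 := by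
    intro i j hij
    refine harr ⟨i.val / 2, by omega⟩ _ ((hg i).1 1 (by simp) 2 (by simp)) _
      ((hg j).1 1 (by simp) 2 (by simp)) ?_ ?_
    · rw [(hg i).2.1 1 (by simp) 2 (by simp)]; simp [qPat]
    · rw [(hg j).2.1 1 (by simp) 2 (by simp)]; simp [qPat, hij]
  have hU : ∀ i j : Fin 4, i.val % 2 = j.val % 2 → g i 2 1 = g j 2 1 := by
    intro i j hij
    refine hup ⟨i.val % 2, by omega⟩ _ ((hg i).1 2 (by simp) 1 (by simp)) _
      ((hg j).1 2 (by simp) 1 (by simp)) ?_ ?_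
    · rw [(hg i).2.1 2 (by simp) 1 (by simp)]; simp [qPat]
    · rw [(hg j).2.1 2 (by simp) 1 (by simp)]; simp [qPat, hij]
  have hw : ∀ i, (g i 2 2).west = (g i 1 2).east :=
    fun i => (hg i).2.2.1 1 2 (by simp) (by simp)
  have hs : ∀ i, (g i 2 2).south = (g i 2 1).north :=
    fun i => (hg i).2.2.2 2 1 (by simp) (by simp)
  have hO : ∀ i, g i 2 2 ∈ T.tiles := fun i => (hg i).1 2 (by simp) 2 (by simp)
  refine ⟨fun b => bif b then (g 2 1 2).east else (g 0 1 2).east,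
    fun b => bif b then (g 1 2 1).north else (g 0 2 1).north, ?_, ?_, ?_, ?_, ?_, ?_⟩
  · intro h
    simp only [cond_false, cond_true] at h
    have : g 0 2 2 = g 2 2 2 := by
      apply hd.eq (hO _) (hO _)
      · rw [hs, hs, hU 0 2 (by simp)]
      · rw [hw, hw, h]
    exact or_east_ne hd hg hbW (i := 2) (by simp) (by rw [this])
  · intro h
    simp only [cond_false, cond_true] at h
    have : g 0 2 2 = g 1 2 2 := by
      apply hd.eq (hO _) (hO _)
      · rw [hs, hs, h]
      · rw [hw, hw, hA 0 1 (by simp)]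
    exact or_east_ne hd hg hbW (i := 1) (by simp) (by rw [this])
  · intro t ht hc
    rw [harr 0 t ht (g 0 1 2) ((hg 0).1 1 (by simp) 2 (by simp)) hc
      (by rw [(hg 0).2.1 1 (by simp) 2 (by simp)]; simp [qPat])]
    rfl
  · intro t ht hc
    rw [hup 0 t ht (g 0 2 1) ((hg 0).1 2 (by simp) 1 (by simp)) hc
      (by rw [(hg 0).2.1 2 (by simp) 1 (by simp)]; simp [qPat])]
    rfl
  · intro t ht hc
    rw [hup 1 t ht (g 1 2 1) ((hg 1).1 2 (by simp) 1 (by simp)) hc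
      (by rw [(hg 1).2.1 2 (by simp) 1 (by simp)]; simp [qPat])]
    rfl
  · intro i
    rw [hw, hs]
    fin_cases i
    · simp
    · simp [hA 1 0 (by simp)]
    · simp [hU 2 0 (by simp)]
    · simp [hA 3 2 (by simp), hU 3 1 (by simp)]

/-- If the `OR` tiles in the middle of `q₁, …, q₄` are different, there are four `OR` types. -/
lemma four_le_or (hg : ∀ i, Realizes T 4 4 (qPat i) (g i))
    (hinj : Function.Injective (fun i => g i 2 2)) : 4 ≤ (ofColor T PColor.orC).card := by
  have key : (Finset.univ : Finset (Fin 4)).card ≤ (ofColor T PColor.orC).card := by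
    apply Finset.card_le_card_of_injOn (fun i => g i 2 2)
    · intro i _
      exact mem_ofColor.2 ⟨(hg i).1 2 (by simp) 2 (by simp), (hg i).2.1 2 (by simp) 2 (by simp)⟩
    · exact hinj.injOn
  simpa using key

end Gates

/-- The tile types of `T` compute `OR`: bits are encoded by the glues `e` (horizontally) and `n`
(vertically), the arrow `→₀` emits `0`, the color `+` accepts `1` only, and all colors of the
pattern other than `OR` have a single tile type. -/
def ComputesOr {G : Type} (F : CNF3) (T : RTAS PColor G) (e n : Bool → G) : Prop :=
  e false ≠ e true ∧ n false ≠ n true ∧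
  (∀ t ∈ T.tiles, t.color = PColor.orC →
    ∃ a b, t.west = e a ∧ t.south = n b ∧ t.east = e (a || b)) ∧
  (∀ t ∈ T.tiles, t.color = PColor.plus → t.west = e true) ∧
  (∀ t ∈ T.tiles, t.color = PColor.arrW 0 → t.east = e false) ∧
  (∀ c ∈ colorsOf (widthF F) 6 (patF F), c ≠ PColor.orC → Single T c)

/-- The subpatterns `p` and `q₁, …, q₅` force the tile set to compute `OR`: at least three `OR`
types come from `p`, a fourth from the gates (if `c` has one type) or from the different inputs in
`qᵢ` (if the last extra type is spent on `c`). This exhausts the budget, and the chain of gates in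
`q₅` identifies the output glues with the input glues. -/
lemma computesOr {G : Type} {F : CNF3} {T : RTAS PColor G} (hd : DirectedTAS T)
    (hT : SelfAssembles T (widthF F) 6 (patF F))
    (hcard : T.tiles.card ≤ (colorsOf (widthF F) 6 (patF F)).card + 3) :
    ∃ e n : Bool → G, ComputesOr F T e n := by
  classical
  have hsum := sum_ofColor_le hT hcard
  obtain ⟨⟨gp, hgp⟩, -⟩ := realizes_block hT (16, 2, pPat) (by simp [blocksOf])
  have hq : ∀ i : Fin 4, _ := fun i => realizes_block hT (4, 4, qPat i)
    (by fin_cases i <;> simp [blocksOf])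
  obtain ⟨⟨g5, hg5⟩, -⟩ := realizes_block hT (6, 3, q5Pat) (by simp [blocksOf])
  choose g hg using fun i => (hq i).1
  replace hq := fun i => (hq i).2
  simp only at hgp hg hg5 hq
  have h3 := three_le_or hd hgp
  have cO : PColor.orC ∈ colorsOf (widthF F) 6 (patF F) := hq 0 2 (by simp) 2 (by simp)
  have ccW : PColor.cW ∈ colorsOf (widthF F) 6 (patF F) := hq 0 1 (by simp) 3 (by simp)
  have cbW : PColor.bW ∈ colorsOf (widthF F) 6 (patF F) := hq 0 3 (by simp) 1 (by simp)
  have carr : ∀ w, PColor.arrW w ∈ colorsOf (widthF F) 6 (patF F) := by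
    intro w
    have h0 := hq 0 1 (by simp) 2 (by simp)
    have h2 := hq 2 1 (by simp) 2 (by simp)
    fin_cases w
    · exact h0
    · exact h2
  have cup : ∀ w, PColor.upW w ∈ colorsOf (widthF F) 6 (patF F) := by
    intro w
    have h0 := hq 0 2 (by simp) 1 (by simp)
    have h1 := hq 1 2 (by simp) 1 (by simp)
    fin_cases w
    · exact h0
    · exact h1
  have h4 : 4 ≤ (ofColor T PColor.orC).card := by
    by_cases hW : (ofColor T PColor.cW).card ≤ 1
    · apply four_le_or hg
      intro i j hij
      exact or_north_injective hd hg (single_of_card hW) (congrArg Tile.north hij)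
    · -- two extra types for `OR` and one for `c` use up the budget
      have hs : ∀ c ∈ colorsOf (widthF F) 6 (patF F), c ≠ PColor.orC → c ≠ PColor.cW →
          Single T c := by
        intro c hc h1 h2
        apply single_of_card
        have := hsum {c, PColor.orC, PColor.cW} (by
          intro d hd
          simp only [Finset.mem_insert, Finset.mem_singleton] at hd
          rcases hd with rfl | rfl | rfl <;> assumption)
        rw [Finset.sum_insert (by simp [h1, h2]), Finset.sum_insert (by simp),
          Finset.sum_singleton, Finset.card_insert_of_notMem (by simp [h1, h2]),
          Finset.card_insert_of_notMem (by simp), Finset.card_singleton] at this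
        omega
      obtain ⟨e, n, he, hn, -, -, -, hio⟩ := or_inputs hd hg (hs _ cbW (by simp) (by simp))
        (fun w => hs _ (carr w) (by simp) (by simp)) (fun w => hs _ (cup w) (by simp) (by simp))
      apply four_le_or hg
      intro i j hij
      have h1 := congrArg Tile.west hij
      have h2 := congrArg Tile.south hij
      simp only [(hio _).1, (hio _).2] at h1 h2
      fin_cases i <;> fin_cases j <;> simp_all [eq_comm]
  have hS : ∀ c ∈ colorsOf (widthF F) 6 (patF F), c ≠ PColor.orC → Single T c := by
    intro c hc h1
    apply single_of_card
    have := hsum {c, PColor.orC} (by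
      intro d hd
      simp only [Finset.mem_insert, Finset.mem_singleton] at hd
      rcases hd with rfl | rfl <;> assumption)
    rw [Finset.sum_insert (by simp [h1]), Finset.sum_singleton,
      Finset.card_insert_of_notMem (by simp [h1]), Finset.card_singleton] at this
    omega
  obtain ⟨e, n, he, hn, harr, hu0, hu1, hio⟩ := or_inputs hd hg (hS _ cbW (by simp))
    (fun w => hS _ (carr w) (by simp)) (fun w => hS _ (cup w) (by simp))
  have hN := or_north_injective hd hg (hS _ ccW (by simp))
  have hall : ∀ t ∈ T.tiles, t.color = PColor.orC → ∃ i, t = g i 2 2 := by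
    have hsub : Finset.univ.image (fun i => g i 2 2) ⊆ ofColor T PColor.orC := by
      intro t ht
      obtain ⟨i, -, rfl⟩ := Finset.mem_image.1 ht
      exact mem_ofColor.2 ⟨(hg i).1 2 (by simp) 2 (by simp), (hg i).2.1 2 (by simp) 2 (by simp)⟩
    have hc4 : (Finset.univ.image (fun i => g i 2 2)).card = 4 := by
      rw [Finset.card_image_of_injective _ (fun i j hij => hN (congrArg Tile.north hij))]
      simp
    have hle : (ofColor T PColor.orC).card ≤ 4 := by simpa using hsum {PColor.orC} (by simpa)
    have heq := Finset.eq_of_subset_of_card_le hsub (by omega)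
    intro t ht hc
    have : t ∈ Finset.univ.image (fun i => g i 2 2) := heq ▸ mem_ofColor.2 ⟨ht, hc⟩
    obtain ⟨i, -, hi⟩ := Finset.mem_image.1 this
    exact ⟨i, hi.symm⟩
  -- in `q₅` the gate above an `OR` position tells which of the four types is used there
  have hat : ∀ i : Fin 4, g5 (i + 1) 1 = g i 2 2 := by
    intro i
    have hi := i.isLt
    have hc : (g5 (i + 1) 1).color = PColor.orC := by
      rw [hg5.2.1 _ (by omega) _ (by omega)]
      fin_cases i <;> rfl
    obtain ⟨j, hj⟩ := hall _ (hg5.1 _ (by omega) 1 (by omega)) hc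
    have hgate : g5 (i + 1) 2 = g i 2 3 := by
      refine hS (PColor.gate i) (hq i 2 (by simp) 3 (by simp)) (by simp) _
        (hg5.1 _ (by omega) 2 (by omega)) _ ((hg i).1 2 (by simp) 3 (by simp)) ?_
        ((hg i).2.1 2 (by simp) 3 (by simp))
      rw [hg5.2.1 _ (by omega) _ (by omega)]
      fin_cases i <;> rfl
    have h1 := hg5.2.2.2 (i + 1) 1 (by omega) (by omega)
    have h2 := (hg i).2.2.2 2 2 (by simp) (by simp)
    have hji : j = i := by
      apply hN
      simp only
      rw [← hj, ← h1, hgate, h2]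
    rw [hj, hji]
  have hP : ∀ i : Fin 4, i ≠ 0 → (g i 3 2).color = PColor.plus := by
    intro i hi
    rw [(hg i).2.1 3 (by simp) 2 (by simp)]
    simp [qPat, hi]
  have cplus : PColor.plus ∈ colorsOf (widthF F) 6 (patF F) := hq 1 3 (by simp) 2 (by simp)
  have hplus : ∀ t ∈ T.tiles, t.color = PColor.plus → ∀ i : Fin 4, i ≠ 0 →
      (g i 2 2).east = t.west := by
    intro t ht hc i hi
    rw [hS _ cplus (by simp) t ht _ ((hg i).1 3 (by simp) 2 (by simp)) hc (hP i hi)]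
    exact ((hg i).2.2.1 2 2 (by simp) (by simp)).symm
  have he0 : (g 0 2 2).east = e false := by
    have h := hg5.2.2.1 1 1 (by omega) (by omega)
    have a0 := hat 0
    have a1 := hat 1
    simp only [Fin.val_zero, Fin.val_one, Nat.zero_add, Nat.reduceAdd] at a0 a1 h
    rw [a0, a1, (hio 1).1] at h
    simpa using h.symm
  have he1 : (g 1 2 2).east = e true := by
    have h := hg5.2.2.1 2 1 (by omega) (by omega)
    have a1 := hat 1
    have a2 := hat 2
    simp only [Fin.val_one, Fin.val_two, Nat.reduceAdd] at a1 a2 h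
    rw [a1, a2, (hio 2).1] at h
    simpa using h.symm
  have hw : ∀ t ∈ T.tiles, t.color = PColor.plus → t.west = e true := by
    intro t ht hc
    rw [← hplus t ht hc 1 (by simp), he1]
  have hm1 := (hg 1).1 3 (by simp) 2 (by simp)
  have heast : ∀ i : Fin 4, i ≠ 0 → (g i 2 2).east = e true := by
    intro i hi
    rw [hplus _ hm1 (hP 1 (by simp)) i hi, hw _ hm1 (hP 1 (by simp))]
  refine ⟨e, n, he, hn, ?_, hw, harr, hS⟩
  intro t ht hc
  obtain ⟨i, rfl⟩ := hall t ht hc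
  refine ⟨_, _, (hio i).1, (hio i).2, ?_⟩
  by_cases hi : i = 0
  · subst hi
    simpa using he0
  · rw [heast i hi]
    fin_cases i <;> simp_all

/-! ### From a tile set to a satisfying assignment -/

lemma bool_glue_inj {G : Type} {e : Bool → G} (he : e false ≠ e true) {a b : Bool}
    (h : e a = e b) : a = b := by
  cases a <;> cases b <;> simp_all

/-- The north glues of the tiles `v` and `¬v` encode complementary bits. -/
lemma var_bits {G : Type} {F : CNF3} {T : RTAS PColor G} {e n : Bool → G} (hd : DirectedTAS T)
    (hT : SelfAssembles T (widthF F) 6 (patF F)) (hor : ComputesOr F T e n)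
    {v : ℕ} (hv : v < F.numVars) :
    ∃ a, (∀ t ∈ T.tiles, t.color = PColor.varW v → t.north = n a) ∧
      (∀ t ∈ T.tiles, t.color = PColor.negW v → t.north = n (!a)) := by
  obtain ⟨he, hn, hO, -, -, hS⟩ := hor
  obtain ⟨⟨g1, m1, c1, h1, v1⟩, C1⟩ := realizes_block hT (2, 2, r1Pat v)
    (var_mem hv _ (by simp))
  obtain ⟨⟨g2, m2, c2, h2, v2⟩, C2⟩ := realizes_block hT (2, 2, r2Pat v)
    (var_mem hv _ (by simp))
  obtain ⟨⟨g3, m3, c3, h3, v3⟩, -⟩ := realizes_block hT (4, 2, r3Pat v)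
    (var_mem hv _ (by simp))
  simp only at m1 c1 h1 v1 C1 m2 c2 h2 v2 C2 m3 c3 h3 v3
  have SP := hS (PColor.varW v) (C1 1 (by simp) 0 (by simp)) (by simp)
  have SN := hS (PColor.negW v) (C2 1 (by simp) 0 (by simp)) (by simp)
  have SA := hS (PColor.varAux v) (C1 0 (by simp) 1 (by simp)) (by simp)
  have p1 := SP _ (m1 1 (by simp) 0 (by simp)) _ (m3 1 (by simp) 0 (by simp))
    (c1 1 (by simp) 0 (by simp)) (c3 1 (by simp) 0 (by simp))
  have p2 := SN _ (m2 1 (by simp) 0 (by simp)) _ (m3 2 (by simp) 0 (by simp))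
    (c2 1 (by simp) 0 (by simp)) (c3 2 (by simp) 0 (by simp))
  have pA := SA _ (m1 0 (by simp) 1 (by simp)) _ (m2 0 (by simp) 1 (by simp))
    (c1 0 (by simp) 1 (by simp)) (c2 0 (by simp) 1 (by simp))
  have hne : (g3 1 0).north ≠ (g3 2 0).north := by
    intro h
    rw [← p1, ← p2] at h
    have e1 : g1 1 1 = g2 1 1 := by
      apply hd.eq (m1 1 (by simp) 1 (by simp)) (m2 1 (by simp) 1 (by simp))
      · rw [v1 1 0 (by simp) (by simp), v2 1 0 (by simp) (by simp), h]
      · rw [h1 0 1 (by simp) (by simp), h2 0 1 (by simp) (by simp), pA]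
    have e2 := congrArg Tile.color e1
    rw [c1 1 (by simp) 1 (by simp), c2 1 (by simp) 1 (by simp)] at e2
    simp [r1Pat, r2Pat] at e2
  obtain ⟨-, a, -, ha, -⟩ := hO _ (m3 1 (by simp) 1 (by simp)) (c3 1 (by simp) 1 (by simp))
  obtain ⟨-, b, -, hb, -⟩ := hO _ (m3 2 (by simp) 1 (by simp)) (c3 2 (by simp) 1 (by simp))
  rw [v3 1 0 (by simp) (by simp)] at ha
  rw [v3 2 0 (by simp) (by simp)] at hb
  have hab : b = !a := by
    rw [ha, hb] at hne
    cases a <;> cases b <;> simp_all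
  refine ⟨a, fun t ht hc => ?_, fun t ht hc => ?_⟩
  · rw [SP t ht _ (m3 1 (by simp) 0 (by simp)) hc (c3 1 (by simp) 0 (by simp)), ha]
  · rw [SN t ht _ (m3 2 (by simp) 0 (by simp)) hc (c3 2 (by simp) 0 (by simp)), hb, hab]

/-- Reading the bit of each variable off the north glue of its tile, the `OR` chain above each
clause ends in `+`, so the clause is true. -/
lemma satisfiable_of_assembly {G : Type} {F : CNF3} {T : RTAS PColor G} (hd : DirectedTAS T)
    (hcard : T.tiles.card ≤ (colorsOf (widthF F) 6 (patF F)).card + 3)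
    (hT : SelfAssembles T (widthF F) 6 (patF F)) : F.Satisfiable := by
  obtain ⟨e, n, hor⟩ := computesOr hd hT hcard
  choose! val hpos hneg using fun v (hv : v < F.numVars) => var_bits hd hT hor hv
  obtain ⟨he, hn, hO, hP, hA, -⟩ := hor
  have hlit : ∀ l : Lit, l.1 < F.numVars → ∀ t ∈ T.tiles, t.color = litColor l →
      t.north = n (litVal val l) := by
    rintro ⟨v, b⟩ hv t ht hc
    cases b
    · simpa [litVal] using hneg v hv t ht hc
    · simpa [litVal] using hpos v hv t ht hc
  refine ⟨val, fun cl hcl => ?_⟩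
  obtain ⟨hw1, hw2, hw3⟩ := F.wf cl hcl
  obtain ⟨⟨g, m, c, h, v⟩, -⟩ := realizes_block hT (5, 2, sPat cl)
    (by simp only [blocksOf, List.mem_append, List.mem_map]; exact Or.inr ⟨cl, hcl, rfl⟩)
  simp only at m c h v
  have north1 := hlit _ hw1 _ (m 1 (by simp) 0 (by simp)) (c 1 (by simp) 0 (by simp))
  have north2 := hlit _ hw2 _ (m 2 (by simp) 0 (by simp)) (c 2 (by simp) 0 (by simp))
  have north3 := hlit _ hw3 _ (m 3 (by simp) 0 (by simp)) (c 3 (by simp) 0 (by simp))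
  rw [← v 1 0 (by simp) (by simp)] at north1
  rw [← v 2 0 (by simp) (by simp)] at north2
  rw [← v 3 0 (by simp) (by simp)] at north3
  have step : ∀ i, i + 1 < 5 → (g (i + 1) 1).color = PColor.orC → ∀ a b, (g i 1).east = e a →
      (g (i + 1) 1).south = n b → (g (i + 1) 1).east = e (a || b) := by
    intro i hi hc a b ha hb
    obtain ⟨a', b', h1, h2, h3⟩ := hO _ (m _ hi 1 (by simp)) hc
    rw [h i 1 hi (by simp), ha] at h1
    rw [hb] at h2
    rw [h3, bool_glue_inj he h1, bool_glue_inj hn h2]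
  have s0 := hA _ (m 0 (by simp) 1 (by simp)) (c 0 (by simp) 1 (by simp))
  have s1 := step 0 (by simp) (c 1 (by simp) 1 (by simp)) _ _ s0 north1
  have s2 := step 1 (by simp) (c 2 (by simp) 1 (by simp)) _ _ s1 north2
  have s3 := step 2 (by simp) (c 3 (by simp) 1 (by simp)) _ _ s2 north3
  have s4 := hP _ (m 4 (by simp) 1 (by simp)) (c 4 (by simp) 1 (by simp))
  rw [h 3 1 (by simp) (by simp), s3] at s4
  simpa using bool_glue_inj he s4

/-! ### The tile set of a satisfying assignment -/

/-- The glues of the constructed tile set. A `bit` is a truth value carried in either direction,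
`orOut w s` is the north glue of the `OR` tile with inputs `w` and `s`, `named c` is an auxiliary
glue labelled by a color, and `pos x y` is used only between the unique colors, as an input of the
tile at position `(x, y)`. -/
inductive Glue where
  | bit (b : Bool)
  | orOut (w s : Bool)
  | named (c : PColor)
  | pos (x y : ℕ)

/-- A color together with the inputs `w` and `s` of the `OR` gate; the two bits are irrelevant for
colors other than `OR`. -/
abbrev Kind := PColor × Bool × Bool

/-- The west glue of a tile with a color other than the unique ones. -/
def kWest : Kind → Glue
  | (.orC, w, _) => .bit w
  | (.plus, _) => .bit true
  | (.minus, _) => .bit false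
  | (.upW _, _) | (.varW _, _) | (.negW _, _) | (.bW, _) => .named .bW
  | (.upD _, _) | (.bD, _) => .named .bD
  | (.gate _, _) | (.dC, _) => .named .dC
  -- the tile `Xᵢ` follows the bottom `OR` tile of the block before it, whose output is `0` only
  -- for the inputs `0, 0`, used in the blocks `0` and `4`
  | (.X i, _) => .bit (decide (i.val % 4 ≠ 1))
  | (.Y i, _) => .bit (decide (4 ≤ i.val))
  | (.varMod v, _) | (.varModd v, _) => .named (.varMod v)
  | (c, _) => .named c

/-- The south glue of a tile with a color other than the unique ones, for the variable assignment
`a`. -/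
def kSouth (a : ℕ → Bool) : Kind → Glue
  | (.orC, _, s) => .bit s
  | (.plus, _) | (.minus, _) => .named .plus
  | (.arrD _, _) => .named (.arrD 0)
  | (.arrW _, _) => .named (.arrW 0)
  | (.gate i, _) => .orOut (decide (2 ≤ i.val)) (decide (i.val % 2 = 1))
  | (.Y i, _) => .orOut (decide (2 ≤ i.val % 4)) (decide (i.val % 2 = 1))
  | (.varAux _, _) => .named (.varAux 0)
  | (.varMod v, _) => .bit (a v)
  | (.varModd v, _) => .bit (!a v)
  | (c, _) => .named c

/-- The east glue of a tile with a color other than the unique ones; the value is immaterial for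
colors whose east neighbor is always unique, and likewise in `kNorth`. -/
def kEast : Kind → Glue
  | (.orC, w, s) => .bit (w || s)
  | (.Z1, _) => .named .Z2
  | (.Z2, _) | (.upD _, _) => .named .bD
  | (.Z3, _) => .named .aC
  | (.Z4, _) | (.aC, _) | (.upW _, _) | (.varW _, _) | (.negW _, _) => .named .bW
  | (.arrD w, _) => .named (.arrW w)
  | (.arrW w, _) => .bit (decide (w = 1))
  | (.cD, _) => .named .cW
  | (.cW, _) | (.gate _, _) => .named .dC
  | (.X i, _) => .bit (decide (2 ≤ i.val % 4))
  | (.Y _, _) => .bit false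
  | (.varAux v, _) => .named (.varMod v)
  | (c, _) => .named c

/-- The north glue of a tile with a color other than the unique ones, for the variable assignment
`a`. -/
def kNorth (a : ℕ → Bool) : Kind → Glue
  | (.orC, w, s) => .orOut w s
  | (.plus, _) | (.minus, _) => .named .dC
  | (.Z1, _) => .named .Z3
  | (.Z2, _) => .named .aC
  | (.Z3, _) => .named (.arrD 0)
  | (.Z4, _) => .named (.varAux 0)
  | (.aC, _) => .named (.arrW 0)
  | (.bW, _) => .named .plus
  | (.bD, _) => .named .bW
  | (.upW s, _) => .bit (decide (s = 1))
  | (.upD s, _) => .named (.upW s)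
  | (.arrD _, _) => .named .cD
  | (.arrW _, _) => .named .cW
  | (.X i, _) => .bit (decide (4 ≤ i.val))
  | (.varW v, _) => .bit (a v)
  | (.negW v, _) => .bit (!a v)
  | (c, _) => .named c

/-- Whether the color is one of the unique filler colors. -/
def isUniq : Kind → Bool
  | (.uniq _, _) => true
  | _ => false

/-- The tile of a kind whose color is not unique. -/
def kTile (a : ℕ → Bool) (k : Kind) : Tile PColor Glue :=
  ⟨k.1, kNorth a k, kEast k, kSouth a k, kWest k⟩

lemma kWest_ne_pos (k : Kind) (x y : ℕ) : kWest k ≠ .pos x y := by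
  obtain ⟨c, w, s⟩ := k
  cases c <;> simp [kWest]

lemma kSouth_ne_pos (a : ℕ → Bool) (k : Kind) (x y : ℕ) : kSouth a k ≠ .pos x y := by
  obtain ⟨c, w, s⟩ := k
  cases c <;> simp [kSouth]

lemma kEast_ne_pos (k : Kind) (x y : ℕ) : kEast k ≠ .pos x y := by
  obtain ⟨c, w, s⟩ := k
  cases c <;> simp [kEast]

lemma kNorth_ne_pos (a : ℕ → Bool) (k : Kind) (x y : ℕ) : kNorth a k ≠ .pos x y := by
  obtain ⟨c, w, s⟩ := k
  cases c <;> simp [kNorth]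

lemma kTile_congr (a : ℕ → Bool) {c : PColor} (hc : c ≠ .orC) (b b' : Bool × Bool) :
    kTile a (c, b) = kTile a (c, b') := by
  cases c <;> first | exact absurd rfl hc | rfl

lemma fin8_eq {i j : Fin 8} (h1 : 4 ≤ i.val ↔ 4 ≤ j.val) (h2 : 2 ≤ i.val % 4 ↔ 2 ≤ j.val % 4)
    (h3 : i.val % 2 = 1 ↔ j.val % 2 = 1) : i = j := by
  apply Fin.ext
  omega

lemma fin4_eq {i j : Fin 4} (h2 : 2 ≤ i.val ↔ 2 ≤ j.val)
    (h3 : i.val % 2 = 1 ↔ j.val % 2 = 1) : i = j := by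
  apply Fin.ext
  omega

/-- The inputs determine the tile. -/
lemma kTile_eq (a : ℕ → Bool) {k k' : Kind} (hk : isUniq k = false) (hk' : isUniq k' = false)
    (hw : kWest k = kWest k') (hs : kSouth a k = kSouth a k') : kTile a k = kTile a k' := by
  obtain ⟨c, w, s⟩ := k
  obtain ⟨c', w', s'⟩ := k'
  by_cases hc : c = c'
  · subst hc
    by_cases ho : c = .orC
    · subst ho
      simp only [kWest, kSouth, Glue.bit.injEq] at hw hs
      rw [hw, hs]
    · exact kTile_congr a ho _ _
  · exfalso
    cases c <;> simp only [isUniq, Bool.true_eq_false] at hk <;> cases c' <;>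
      simp_all [kWest, kSouth, isUniq] <;>
      first
      | exact hc (fin8_eq hw hs.1 hs.2)
      | exact hc (fin4_eq hs.1 hs.2)

/-! ### The annotated pattern -/

/-- Annotated blocks. -/
abbrev KBlock := ℕ × ℕ × (ℕ → ℕ → Kind)

/-- The placement of annotated blocks. -/
def placeK : List KBlock → ℕ → ℕ → ℕ → Kind
  | [], _, x, y => (.uniq (Nat.pair x y), false, false)
  | b :: bs, x0, x, y =>
      if x0 ≤ x ∧ x < x0 + b.1 ∧ 1 ≤ y ∧ y < 1 + b.2.1 then
        b.2.2 (x - x0) (y - 1)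
      else if x < x0 + b.1 + 1 then (.uniq (Nat.pair x y), false, false)
      else placeK bs (x0 + b.1 + 1) x y

/-- Forget the annotation of a block. -/
def KBlock.forget (b : KBlock) : PBlock := (b.1, b.2.1, fun x y => (b.2.2 x y).1)

lemma placeK_fst (bs : List KBlock) (x0 x y : ℕ) :
    (placeK bs x0 x y).1 = place (bs.map KBlock.forget) x0 x y := by
  induction bs generalizing x0 with
  | nil => rfl
  | cons b bs ih =>
    simp only [placeK, place, List.map_cons, KBlock.forget]
    split_ifs
    · rfl
    · rfl
    · exact ih _

/-- A block in which no color is unique and all inner glues match. -/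
def KBlock.Good (a : ℕ → Bool) (b : KBlock) : Prop :=
  (∀ i < b.1, ∀ j < b.2.1, isUniq (b.2.2 i j) = false) ∧
  (∀ i < b.1, ∀ j < b.2.1, i + 1 < b.1 → kWest (b.2.2 (i + 1) j) = kEast (b.2.2 i j)) ∧
  (∀ i < b.1, ∀ j < b.2.1, j + 1 < b.2.1 → kSouth a (b.2.2 i (j + 1)) = kNorth a (b.2.2 i j))

/-- The properties of the annotated pattern from which the tile set is built. -/
def GoodLayout (a : ℕ → Bool) (K : ℕ → ℕ → Kind) : Prop :=
  (∀ x y n, (K x y).1 = .uniq n → n = Nat.pair x y) ∧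
  (∀ x y, isUniq (K (x + 1) (y + 1)) = true →
    isUniq (K x (y + 1)) = true ∨ isUniq (K (x + 1) y) = true) ∧
  (∀ x y, isUniq (K x y) = false → isUniq (K (x + 1) y) = false →
    kWest (K (x + 1) y) = kEast (K x y)) ∧
  (∀ x y, isUniq (K x y) = false → isUniq (K x (y + 1)) = false →
    kSouth a (K x (y + 1)) = kNorth a (K x y))

lemma placeK_inside (b : KBlock) (bs : List KBlock) {x0 x y : ℕ}
    (h : x0 ≤ x ∧ x < x0 + b.1 ∧ 1 ≤ y ∧ y < 1 + b.2.1) :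
    placeK (b :: bs) x0 x y = b.2.2 (x - x0) (y - 1) := by
  rw [placeK, if_pos h]

lemma placeK_around (b : KBlock) (bs : List KBlock) {x0 x y : ℕ}
    (h : ¬ (x0 ≤ x ∧ x < x0 + b.1 ∧ 1 ≤ y ∧ y < 1 + b.2.1)) (hx : x < x0 + b.1 + 1) :
    placeK (b :: bs) x0 x y = (.uniq (Nat.pair x y), false, false) := by
  rw [placeK, if_neg h, if_pos hx]

lemma placeK_after (b : KBlock) (bs : List KBlock) {x0 x y : ℕ}
    (hx : x0 + b.1 + 1 ≤ x) :
    placeK (b :: bs) x0 x y = placeK bs (x0 + b.1 + 1) x y := by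
  rw [placeK, if_neg (by omega), if_neg (by omega)]

lemma isUniq_of_fst {k : Kind} {n : ℕ} (h : k.1 = .uniq n) : isUniq k = true := by
  obtain ⟨c, b⟩ := k
  simp only at h
  subst h
  rfl

/-- Blocks are separated by columns and rows of unique colors, so only inner glues matter. -/
lemma goodLayout_placeK (a : ℕ → Bool) (bs : List KBlock) (x0 : ℕ) (hb : ∀ b ∈ bs, b.Good a) :
    GoodLayout a (placeK bs x0) := by
  induction bs generalizing x0 with
  | nil =>
    refine ⟨fun x y n h => ?_, fun x y _ => Or.inl rfl, fun x y h => ?_, fun x y h => ?_⟩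
    · simpa [placeK] using h.symm
    · simp [placeK, isUniq] at h
    · simp [placeK, isUniq] at h
  | cons b bs ih =>
    obtain ⟨i1, i2, i3, i4⟩ := ih (x0 + b.1 + 1) (fun b' h => hb b' (List.mem_cons_of_mem _ h))
    obtain ⟨g1, g2, g3⟩ := hb b List.mem_cons_self
    refine ⟨fun x y n h => ?_, fun x y h => ?_, fun x y h h' => ?_, fun x y h h' => ?_⟩
    · by_cases hx : x0 + b.1 + 1 ≤ x
      · rw [placeK_after b bs hx] at h
        exact i1 x y n h
      · by_cases hin : x0 ≤ x ∧ x < x0 + b.1 ∧ 1 ≤ y ∧ y < 1 + b.2.1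
        · rw [placeK_inside b bs hin] at h
          have := g1 (x - x0) (by omega) (y - 1) (by omega)
          rw [isUniq_of_fst h] at this
          simp at this
        · rw [placeK_around b bs hin (by omega)] at h
          simpa using h.symm
    · by_cases hx : x0 + b.1 + 1 ≤ x
      · rw [placeK_after b bs (by omega)] at h ⊢
        rw [placeK_after b bs (by omega)]
        exact i2 x y h
      · by_cases hx1 : x = x0 + b.1
        · left
          rw [placeK_around b bs (by omega) (by omega)]
          rfl
        · by_cases hin : x0 ≤ x + 1 ∧ x + 1 < x0 + b.1 ∧ y + 1 < 1 + b.2.1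
          · rw [placeK_inside b bs (by omega), g1 _ (by omega) _ (by omega)] at h
            simp at h
          · by_cases hy : y + 1 < 1 + b.2.1
            · right
              rw [placeK_around b bs (by omega) (by omega)]
              rfl
            · left
              rw [placeK_around b bs (by omega) (by omega)]
              rfl
    · by_cases hx : x0 + b.1 + 1 ≤ x
      · rw [placeK_after b bs (by omega)] at h h' ⊢
        rw [placeK_after b bs (by omega)]
        exact i3 x y h h'
      · by_cases hin : x0 ≤ x ∧ x < x0 + b.1 ∧ 1 ≤ y ∧ y < 1 + b.2.1
        · by_cases hin' : x + 1 < x0 + b.1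
          · rw [placeK_inside b bs hin, placeK_inside b bs (by omega),
              Nat.sub_add_comm hin.1]
            exact g2 _ (by omega) _ (by omega) (by omega)
          · rw [placeK_around b bs (by omega) (by omega)] at h'
            simp [isUniq] at h'
        · rw [placeK_around b bs hin (by omega)] at h
          simp [isUniq] at h
    · by_cases hx : x0 + b.1 + 1 ≤ x
      · rw [placeK_after b bs (by omega)] at h h' ⊢
        rw [placeK_after b bs (by omega)]
        exact i4 x y h h'
      · by_cases hin : x0 ≤ x ∧ x < x0 + b.1 ∧ 1 ≤ y ∧ y < 1 + b.2.1
        · by_cases hin' : y + 1 < 1 + b.2.1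
          · rw [placeK_inside b bs hin, placeK_inside b bs (by omega),
              Nat.sub_add_comm hin.2.2.1]
            exact g3 _ (by omega) _ (by omega) (by omega)
          · rw [placeK_around b bs (by omega) (by omega)] at h'
            simp [isUniq] at h'
        · rw [placeK_around b bs hin (by omega)] at h
          simp [isUniq] at h

/-- The annotations of the blocks: the inputs of the gates at the `OR` positions. In `p`, block
`i` has bottom inputs `i % 4` (in binary) and top inputs `0` and `i / 4`, so that the eight tiles
`Yᵢ` see different pairs of a north and an east glue. -/
def kBlocks (F : CNF3) (a : ℕ → Bool) : List KBlock :=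
  [(16, 2, fun x y => (pPat x y, if y = 0 then
      (decide (2 ≤ x / 2 % 4), decide (x / 2 % 2 = 1)) else (false, decide (8 ≤ x)))),
    (4, 4, fun x y => (qPat 0 x y, false, false)), (4, 4, fun x y => (qPat 1 x y, false, true)),
    (4, 4, fun x y => (qPat 2 x y, true, false)), (4, 4, fun x y => (qPat 3 x y, true, true)),
    (6, 3, fun x y => (q5Pat x y, decide (3 ≤ x), decide (x % 2 = 0)))]
    ++ (List.range F.numVars).flatMap
        (fun v => [(2, 2, fun x y => (r1Pat v x y, false, false)),
          (2, 2, fun x y => (r2Pat v x y, false, false)),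
          (4, 2, fun x y => (r3Pat v x y, decide (x = 2) && a v, if x = 1 then a v else !a v))])
    ++ F.clauses.map (fun cl => (5, 2, fun x y => (sPat cl x y,
        decide (2 ≤ x) && litVal a cl.1 || decide (3 ≤ x) && litVal a cl.2.1,
        if x = 1 then litVal a cl.1 else if x = 2 then litVal a cl.2.1 else litVal a cl.2.2)))

lemma kBlocks_forget (F : CNF3) (a : ℕ → Bool) :
    (kBlocks F a).map KBlock.forget = blocksOf F := by
  simp [kBlocks, blocksOf, KBlock.forget, List.map_flatMap, Function.comp_def]

lemma kWest_lit (l : Lit) (b : Bool × Bool) : kWest (litColor l, b) = .named .bW := by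
  obtain ⟨v, _ | _⟩ := l <;> rfl

lemma kEast_lit (l : Lit) (b : Bool × Bool) : kEast (litColor l, b) = .named .bW := by
  obtain ⟨v, _ | _⟩ := l <;> rfl

lemma kNorth_lit (a : ℕ → Bool) (l : Lit) (b : Bool × Bool) :
    kNorth a (litColor l, b) = .bit (litVal a l) := by
  obtain ⟨v, _ | _⟩ := l <;> rfl

lemma isUniq_lit (l : Lit) (b : Bool × Bool) : isUniq (litColor l, b) = false := by
  obtain ⟨v, _ | _⟩ := l <;> rfl

/-- In the block of a clause, the input `1` of the final `+` is where satisfaction is needed. -/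
lemma kBlocks_good (F : CNF3) (a : ℕ → Bool)
    (ha : ∀ cl ∈ F.clauses, (litVal a cl.1 || litVal a cl.2.1 || litVal a cl.2.2) = true) :
    ∀ b ∈ kBlocks F a, b.Good a := by
  intro b hb
  simp only [kBlocks, List.mem_append, List.mem_flatMap, List.mem_map, List.mem_cons,
    List.not_mem_nil, or_false] at hb
  rcases hb with ((rfl | rfl | rfl | rfl | rfl | rfl) | ⟨v, -, rfl | rfl | rfl⟩) | ⟨cl, hcl, rfl⟩
  · refine ⟨?_, ?_, ?_⟩ <;> intro i hi j hj <;> simp only at hi hj <;>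
      interval_cases j <;> interval_cases i <;>
      simp [pPat, kWest, kEast, kSouth, kNorth, isUniq]
  iterate 5
    · refine ⟨?_, ?_, ?_⟩ <;> intro i hi j hj <;> simp only at hi hj <;>
        interval_cases j <;> interval_cases i <;>
        simp [qPat, q5Pat, kWest, kEast, kSouth, kNorth, isUniq]
  iterate 3
    · refine ⟨?_, ?_, ?_⟩ <;> intro i hi j hj <;> simp only at hi hj <;>
        interval_cases j <;> interval_cases i <;>
        simp [r1Pat, r2Pat, r3Pat, kWest, kEast, kSouth, kNorth, isUniq]
  · have h := ha cl hcl
    refine ⟨?_, ?_, ?_⟩ <;> intro i hi j hj <;> simp only at hi hj <;>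
      interval_cases j <;> interval_cases i <;>
      simp only [sPat, kWest_lit, kEast_lit, kNorth_lit, isUniq_lit] <;>
      simp [kWest, kEast, kSouth, kNorth, isUniq] <;> simpa [or_assoc] using h

/-! ### The assembly -/

section Assembly

variable (a : ℕ → Bool) (K : ℕ → ℕ → Kind)

/-- The west glue at a position of the assembly. A tile with a unique color adapts to a neighbor
with a repeatable color, so that the tile of the latter depends on its kind only. -/
def hGlue (x y : ℕ) : Glue :=
  if isUniq (K x y) = false then kWest (K x y)
  else if x = 0 ∨ isUniq (K (x - 1) y) = true then .pos x y
  else kEast (K (x - 1) y)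

/-- The south glue at a position of the assembly. -/
def vGlue (x y : ℕ) : Glue :=
  if isUniq (K x y) = false then kSouth a (K x y)
  else if y = 0 ∨ isUniq (K x (y - 1)) = true then .pos x y
  else kNorth a (K x (y - 1))

/-- The tile at a position of the assembly. -/
def asmTile (x y : ℕ) : Tile PColor Glue :=
  ⟨(K x y).1, vGlue a K x (y + 1), hGlue K (x + 1) y, vGlue a K x y, hGlue K x y⟩

variable {a K}

lemma asmTile_of_not_uniq (hK : GoodLayout a K) {x y : ℕ} (h : isUniq (K x y) = false) :
    asmTile a K x y = kTile a (K x y) := by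
  obtain ⟨-, -, h3, h4⟩ := hK
  have e1 : hGlue K (x + 1) y = kEast (K x y) := by
    unfold hGlue
    split_ifs with h1 h2
    · exact h3 x y h h1
    · simp [h] at h2
    · simp
  have e2 : vGlue a K x (y + 1) = kNorth a (K x y) := by
    unfold vGlue
    split_ifs with h1 h2
    · exact h4 x y h h1
    · simp [h] at h2
    · simp
  have e3 : hGlue K x y = kWest (K x y) := if_pos h
  have e4 : vGlue a K x y = kSouth a (K x y) := if_pos h
  simp only [asmTile, kTile, e1, e2, e3, e4]

/-- A unique position has an input from the seed or from another unique position. -/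
lemma pos_input (hK : GoodLayout a K) {x y : ℕ} (h : isUniq (K x y) = true) :
    hGlue K x y = .pos x y ∨ vGlue a K x y = .pos x y := by
  obtain ⟨-, h2, -, -⟩ := hK
  unfold hGlue vGlue
  cases x with
  | zero => simp [h]
  | succ x =>
    cases y with
    | zero => simp [h]
    | succ y => rcases h2 x y h with h' | h' <;> simp [h, h']

lemma hGlue_pos {x y x' y' : ℕ} (h : hGlue K x y = .pos x' y') : x' = x ∧ y' = y := by
  unfold hGlue at h
  split_ifs at h
  · exact absurd h (kWest_ne_pos _ _ _)
  · simpa [eq_comm] using h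
  · exact absurd h (kEast_ne_pos _ _ _)

lemma vGlue_pos {x y x' y' : ℕ} (h : vGlue a K x y = .pos x' y') : x' = x ∧ y' = y := by
  unfold vGlue at h
  split_ifs at h
  · exact absurd h (kSouth_ne_pos _ _ _ _)
  · simpa [eq_comm] using h
  · exact absurd h (kNorth_ne_pos _ _ _ _)

lemma asmTile_eq_of_uniq (hK : GoodLayout a K) {x y x' y' : ℕ} (h : isUniq (K x y) = true)
    (hs : vGlue a K x y = vGlue a K x' y') (hw : hGlue K x y = hGlue K x' y') :
    asmTile a K x y = asmTile a K x' y' := by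
  have : x = x' ∧ y = y' := by
    rcases pos_input hK h with h | h
    · exact hGlue_pos (hw ▸ h)
    · exact vGlue_pos (hs ▸ h)
  rw [this.1, this.2]

lemma asmTile_eq (hK : GoodLayout a K) {x y x' y' : ℕ}
    (hs : vGlue a K x y = vGlue a K x' y') (hw : hGlue K x y = hGlue K x' y') :
    asmTile a K x y = asmTile a K x' y' := by
  cases h : isUniq (K x y)
  · cases h' : isUniq (K x' y')
    · rw [asmTile_of_not_uniq hK h, asmTile_of_not_uniq hK h']
      apply kTile_eq a h h'
      · simpa [hGlue, h, h'] using hw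
      · simpa [vGlue, h, h'] using hs
    · exact (asmTile_eq_of_uniq hK h' hs.symm hw.symm).symm
  · exact asmTile_eq_of_uniq hK h hs hw

/-- Away from `OR`, the color determines the tile. -/
lemma asmTile_eq_of_color (hK : GoodLayout a K) {x y x' y' : ℕ}
    (hc : (K x y).1 = (K x' y').1) (ho : (K x y).1 ≠ .orC) :
    asmTile a K x y = asmTile a K x' y' := by
  have hu : isUniq (K x y) = isUniq (K x' y') := by
    revert hc
    generalize K x y = k
    generalize K x' y' = k'
    rintro h
    obtain ⟨c, b⟩ := k
    obtain ⟨c', b'⟩ := k'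
    simp only at h
    subst h
    cases c <;> rfl
  cases h : isUniq (K x y)
  · rw [asmTile_of_not_uniq hK h, asmTile_of_not_uniq hK (hu ▸ h)]
    have : K x' y' = ((K x y).1, (K x' y').2) := by rw [hc]
    rw [this]
    exact kTile_congr a ho _ _
  · obtain ⟨n, hn⟩ : ∃ n, (K x y).1 = .uniq n := by
      revert h
      generalize K x y = k
      obtain ⟨c, b⟩ := k
      cases c <;> simp [isUniq]
    have e := (hK.1 x y n hn).symm.trans (hK.1 x' y' n (hc ▸ hn))
    rw [Nat.pair_eq_pair] at e
    rw [e.1, e.2]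

end Assembly

/-- The tiles occurring in the assembly of a good layout form a directed system; four of them are
`OR` tiles and each other color has one. -/
lemma assembly_of_layout (a : ℕ → Bool) (K : ℕ → ℕ → Kind) (hK : GoodLayout a K) (M N : ℕ)
    (P : ℕ → ℕ → PColor) (hP : ∀ x y, (K x y).1 = P x y) :
    ∃ (G : Type) (T : RTAS PColor G), DirectedTAS T ∧
      T.tiles.card ≤ (colorsOf M N P).card + 3 ∧ SelfAssembles T M N P := by
  classical
  have hmem : ∀ t, t ∈ (Finset.range M ×ˢ Finset.range N).image
      (fun q => asmTile a K q.1 q.2) ↔ ∃ x < M, ∃ y < N, asmTile a K x y = t := by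
    intro t
    simp only [Finset.mem_image, Finset.mem_product, Finset.mem_range, Prod.exists]
    constructor
    · rintro ⟨x, y, ⟨hx, hy⟩, h⟩
      exact ⟨x, hx, y, hy, h⟩
    · rintro ⟨x, hx, y, hy, h⟩
      exact ⟨x, y, ⟨hx, hy⟩, h⟩
  refine ⟨Glue, ⟨(Finset.range M ×ˢ Finset.range N).image (fun q => asmTile a K q.1 q.2),
    fun x => vGlue a K x 0, fun y => hGlue K 0 y⟩, ?_, ?_, asmTile a K, ⟨?_, ?_, ?_, ?_, ?_⟩, ?_⟩
  · intro t ht t' ht' hne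
    obtain ⟨x, -, y, -, rfl⟩ := (hmem t).1 ht
    obtain ⟨x', -, y', -, rfl⟩ := (hmem t').1 ht'
    by_contra! h
    exact hne (asmTile_eq hK h.1 h.2)
  · simp only
    set A := (Finset.range M ×ˢ Finset.range N).image (fun q => asmTile a K q.1 q.2) with hA
    have hmap : ∀ t ∈ A, t.color ∈ colorsOf M N P := by
      intro t ht
      obtain ⟨x, hx, y, hy, rfl⟩ := (hmem t).1 ht
      exact Finset.mem_image.2 ⟨(x, y), by simp [hx, hy], (hP x y).symm⟩
    have hfib : ∀ c ∈ colorsOf M N P, (A.filter (fun t => t.color = c)).card ≤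
        1 + if c = PColor.orC then 3 else 0 := by
      intro c _
      split_ifs with hc
      · have hsub : A.filter (fun t => t.color = c) ⊆
            (Finset.univ : Finset (Bool × Bool)).image (fun b => kTile a (.orC, b)) := by
          intro t ht
          obtain ⟨ht, htc⟩ := Finset.mem_filter.1 ht
          obtain ⟨x, hx, y, hy, rfl⟩ := (hmem t).1 ht
          have hor : K x y = (.orC, (K x y).2) := by
            rw [← hc, ← htc]
            rfl
          have hu : isUniq (K x y) = false := by
            rw [hor]
            rfl
          rw [asmTile_of_not_uniq hK hu, hor]
          exact Finset.mem_image_of_mem _ (Finset.mem_univ _)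
        exact (Finset.card_le_card hsub).trans (Finset.card_image_le.trans (by simp))
      · rw [add_zero, Finset.card_le_one]
        intro t ht t' ht'
        obtain ⟨ht, htc⟩ := Finset.mem_filter.1 ht
        obtain ⟨ht', htc'⟩ := Finset.mem_filter.1 ht'
        obtain ⟨x, hx, y, hy, rfl⟩ := (hmem t).1 ht
        obtain ⟨x', hx', y', hy', rfl⟩ := (hmem t').1 ht'
        exact asmTile_eq_of_color hK (htc.trans htc'.symm) (fun h => hc (htc.symm.trans h))
    rw [Finset.card_eq_sum_card_fiberwise hmap]
    refine (Finset.sum_le_sum hfib).trans ?_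
    rw [Finset.sum_add_distrib, Finset.sum_ite_eq']
    simp only [Finset.sum_const, smul_eq_mul, mul_one]
    split_ifs <;> omega
  · intro x hx y hy
    exact (hmem _).2 ⟨x, hx, y, hy, rfl⟩
  · intro y _
    rfl
  · intro x _
    rfl
  · intro x _ y _
    rfl
  · intro x _ y _
    rfl
  · intro x _ y _
    exact hP x y

/-- Let `P_F` be the pattern for a 3-CNF formula `F` and `m = |C(P_F)| + 3`.
Then `F` is satisfiable if and only if `P_F` can be self-assembled by a DTAS
with at most `m` tile types. -/
theorem satisfiable_iff_self_assembly (F : CNF3) :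
    F.Satisfiable ↔
      ∃ (G : Type) (T : RTAS PColor G), DirectedTAS T ∧
        T.tiles.card ≤ (colorsOf (widthF F) 6 (patF F)).card + 3 ∧
        SelfAssembles T (widthF F) 6 (patF F) := by
  constructor
  · rintro ⟨a, ha⟩
    refine assembly_of_layout a (placeK (kBlocks F a) 1)
      (goodLayout_placeK a _ 1 (kBlocks_good F a ha)) _ _ _ fun x y => ?_
    rw [placeK_fst, kBlocks_forget, patF]
  · rintro ⟨G, T, hd, hcard, hT⟩
    exact satisfiable_of_assembly hd hcard hT
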